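/- Under the MS-LS model with α_i + α_j = α for all pairs i, j, for every integer m ≥ 1 and state k the m-th factorial moment of the nodal strength satisfies G̃_k^{(m)}(1) = E[Y_t(Y_t−1)⋯(Y_t−m+1) | s_t = k] = Σ_{h ∈ H_i} binom(m; h) e^{αm} (σ_k²)^{−d/2} (1/σ_k² + Σ_{j ∈ N_i} τ_{kj}^{−1})^{−d/2} ∏_{j ∈ N_i} (1/(2βh_j))^{d/2} τ_{kj}^{−d/2}, where τ_{kj} = σ_k² + 1/(2βh_j), H_i is the set of multi-indices h = (h_j)_{j≠i} of nonnegative integers with Σ_{j≠i} h_j = m, binom(m; h) = m!/∏_{j≠i} h_j! is the multinomial coefficient, and N_i = {j ≠ i : h_j > 0}. -/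

import Mathlib

open MeasureTheory ProbabilityTheory Real

noncomputable section

/-- Density of the centered isotropic Gaussian `N(0, σ² I_d)` on `ℝ^d`. -/
def gaussPdf (d : ℕ) (σ2 : ℝ) (x : EuclideanSpace ℝ (Fin d)) : ℝ :=
  (2 * Real.pi * σ2) ^ (-(d : ℝ) / 2) * Real.exp (-‖x‖ ^ 2 / (2 * σ2))

/-- The centered isotropic Gaussian measure `N(0, σ² I_d)` on `ℝ^d`. -/
def gaussMeasure (d : ℕ) (σ2 : ℝ) : Measure (EuclideanSpace ℝ (Fin d)) :=
  volume.withDensity fun x => ENNReal.ofReal (gaussPdf d σ2 x)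

/-- Unordered pairs of distinct nodes, represented as ordered pairs `(i, j)` with `i < j`. -/
abbrev Pairs (N : ℕ) : Type := {p : Fin N × Fin N // p.1 < p.2}

/-- Joint law of the latent positions `(Z_i)_{i}` (i.i.d. `N(0, σ² I_d)`) and of the
edge weights `(Y_{ij})_{i<j}`, which given the latent positions are conditionally independent
Poisson variables with intensity `exp (α_i + α_j - β ‖Z_i - Z_j‖²)`. -/
def jointLaw (d N : ℕ) (β : ℝ) (α : Fin N → ℝ) (σ2 : ℝ) :
    Measure ((Fin N → EuclideanSpace ℝ (Fin d)) × (Pairs N → ℕ)) :=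
  (volume.withDensity fun z : Fin N → EuclideanSpace ℝ (Fin d) =>
      ENNReal.ofReal (∏ i, gaussPdf d σ2 (z i))).bind fun z =>
    (Measure.pi fun p : Pairs N =>
        poissonMeasure
          (Real.exp (α p.1.1 + α p.1.2 - β * ‖z p.1.1 - z p.1.2‖ ^ 2)).toNNReal).map
      fun y => (z, y)

/-- The Markov-switching latent space (MS-LS) network model: a hidden `K`-state Markov chain
`s`, state-dependent i.i.d. Gaussian latent positions `Z`, and symmetric edge weights `Y`
that conditionally on the current state (and given the latent positions) are independent
Poisson variables with log-intensity `α i + α j - β ‖Z i k - Z j k‖²`. -/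
structure MSLS (Ω : Type) [MeasurableSpace Ω] where
  /-- the underlying probability measure -/
  P : Measure Ω
  isProb : IsProbabilityMeasure P
  /-- the dimension of the latent space -/
  d : ℕ
  /-- the number of nodes -/
  N : ℕ
  /-- the number of states of the hidden Markov chain -/
  K : ℕ
  β : ℝ
  β_pos : 0 < β
  /-- individual effects -/
  α : Fin N → ℝ
  /-- state-specific variances of the latent positions -/
  σ2 : Fin K → ℝ
  σ2_pos : ∀ k, 0 < σ2 k
  /-- transition probabilities of the hidden Markov chain -/
  q : Fin K → Fin K → ℝ
  q_nonneg : ∀ l k, 0 ≤ q l k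
  q_sum : ∀ l, ∑ k, q l k = 1
  /-- the hidden Markov chain -/
  s : ℕ → Ω → Fin K
  s_meas : ∀ t, Measurable (s t)
  /-- the latent positions in each state -/
  Z : Fin N → Fin K → Ω → EuclideanSpace ℝ (Fin d)
  Z_meas : ∀ i k, Measurable (Z i k)
  /-- the edge weights -/
  Y : Fin N → Fin N → ℕ → Ω → ℕ
  Y_meas : ∀ i j t, Measurable (Y i j t)
  Y_symm : ∀ i j t ω, Y i j t ω = Y j i t ω
  state_pos : ∀ t k, P {ω | s t ω = k} ≠ 0
  /-- Markov transition probabilities -/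
  trans_prob : ∀ t l k, ((P[|{ω | s t ω = l}]) {ω | s (t + 1) ω = k}).toReal = q l k
  /-- conditionally on the current state, the latent positions and the edge weights follow
  the Poisson latent space law -/
  cond_law_state : ∀ t k,
    (P[|{ω | s t ω = k}]).map
        (fun ω => ((fun i => Z i k ω), fun p : Pairs N => Y p.1.1 p.1.2 t ω)) =
      jointLaw d N β α (σ2 k)
  /-- conditionally on the previous and current state, the latent positions and the edge
  weights follow the Poisson latent space law of the current state -/
  cond_law_pair : ∀ t l k, q l k ≠ 0 →
    (P[|{ω | s t ω = l} ∩ {ω | s (t + 1) ω = k}]).map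
        (fun ω => ((fun i => Z i k ω), fun p : Pairs N => Y p.1.1 p.1.2 (t + 1) ω)) =
      jointLaw d N β α (σ2 k)

attribute [instance] MSLS.isProb

/-- The nodal strength `Y_{it} = Σ_{j ≠ i} Y_{ijt}` of node `i` at time `t`. -/
def MSLS.strength {Ω : Type} [MeasurableSpace Ω] (M : MSLS Ω) (i : Fin M.N) (t : ℕ)
    (ω : Ω) : ℕ :=
  ∑ j ∈ Finset.univ.erase i, M.Y i j t ω

end

/-!
Given the latent positions, the strength of node `i` is a sum of independent Poisson variables,
hence Poisson with rate `∑ j ≠ i, λ_{ij}`, and the `m`-th factorial moment of a Poisson variable is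
the `m`-th power of its rate. Expanding this power by the multinomial theorem leaves the
expectations of the monomials `∏ j ≠ i, λ_{ij} ^ h_j`. Conditionally on `Z_i` the factors are
independent, and each averages to an exponential of a multiple of `‖Z_i‖²`, because the convolution
of a Gaussian with a Gaussian kernel is Gaussian; one last Gaussian integral over `Z_i` remains.
-/

open scoped ENNReal NNReal

section ProductMeasure

variable {ι : Type*} {X : ι → Type*} [∀ i, MeasurableSpace (X i)]

theorem lmarginal_prod_eval [DecidableEq ι] (μ : ∀ i, Measure (X i)) [∀ i, SigmaFinite (μ i)]
    {f : ∀ i, X i → ℝ≥0∞} (hf : ∀ i, Measurable (f i)) (s : Finset ι) :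
    (∫⋯∫⁻_s, (fun x => ∏ i ∈ s, f i (x i)) ∂μ) = fun _ => ∏ i ∈ s, ∫⁻ y, f i y ∂μ i := by
  induction s using Finset.induction_on with
  | empty => simp
  | insert a s ha ih =>
    have hmeas (t : Finset ι) : Measurable fun x : ∀ i, X i => ∏ i ∈ t, f i (x i) := by fun_prop
    have integrate_a (x : ∀ i, X i) :
        ∫⁻ y, ∏ i ∈ insert a s, f i (Function.update x a y i) ∂μ a =
          (∫⁻ y, f a y ∂μ a) * ∏ i ∈ s, f i (x i) := by
      rw [← lintegral_mul_const _ (hf a)]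
      refine lintegral_congr fun y => ?_
      rw [Finset.prod_insert ha, Function.update_self]
      congr 1
      refine Finset.prod_congr rfl fun i hi => ?_
      rw [Function.update_of_ne (ne_of_mem_of_not_mem hi ha)]
    rw [lmarginal_insert' _ (hmeas _) ha]
    simp_rw [integrate_a]
    ext x
    rw [Finset.prod_insert ha, ← congrFun ih x]
    exact lintegral_const_mul _ ((hmeas s).comp measurable_updateFinset)

variable [Fintype ι]

theorem lintegral_pi_prod_eq_prod (μ : ∀ i, Measure (X i)) [∀ i, SigmaFinite (μ i)]
    {f : ∀ i, X i → ℝ≥0∞} (hf : ∀ i, Measurable (f i)) :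
    ∫⁻ x, ∏ i, f i (x i) ∂Measure.pi μ = ∏ i, ∫⁻ y, f i y ∂μ i := by
  classical
  obtain _ | ⟨⟨x⟩⟩ := isEmpty_or_nonempty (∀ i, X i)
  · obtain ⟨i, hi⟩ := isEmpty_pi.1 ‹_›
    rw [lintegral_of_isEmpty, Finset.prod_eq_zero (Finset.mem_univ i) (lintegral_of_isEmpty _ _)]
  · rw [lintegral_eq_lmarginal_univ x, lmarginal_prod_eval μ hf]

/-- Integrate first over the coordinates other than `i`: they are independent given `x i`. -/
theorem lintegral_pi_prod_erase [DecidableEq ι] (μ : ∀ i, Measure (X i))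
    [∀ i, IsProbabilityMeasure (μ i)] (i : ι) {g : ∀ j, X i → X j → ℝ≥0∞}
    (hg : ∀ j, Measurable (Function.uncurry (g j))) :
    ∫⁻ x, ∏ j ∈ Finset.univ.erase i, g j (x i) (x j) ∂Measure.pi μ =
      ∫⁻ u, ∏ j ∈ Finset.univ.erase i, ∫⁻ v, g j u v ∂μ j ∂μ i := by
  have x₀ : ∀ j, X j := fun j => (μ j).nonempty_of_neZero.some
  have hmeas : Measurable fun x : ∀ j, X j => ∏ j ∈ Finset.univ.erase i, g j (x i) (x j) :=
    Finset.measurable_prod _ fun j _ =>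
      (hg j).comp ((measurable_pi_apply i).prodMk (measurable_pi_apply j))
  rw [lintegral_eq_lmarginal_univ x₀, lmarginal_erase _ hmeas (Finset.mem_univ i)]
  refine lintegral_congr fun u => ?_
  have hgu (j : ι) : Measurable (g j u) := (hg j).comp measurable_prodMk_left
  rw [← congrFun (lmarginal_prod_eval μ hgu _) (Function.update x₀ i u)]
  simp [lmarginal, Function.updateFinset]

theorem pi_withDensity (μ : ∀ i, Measure (X i)) [∀ i, SigmaFinite (μ i)] {f : ∀ i, X i → ℝ≥0∞}
    (hf : ∀ i, Measurable (f i)) [∀ i, SigmaFinite ((μ i).withDensity (f i))] :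
    Measure.pi (fun i => (μ i).withDensity (f i)) =
      (Measure.pi μ).withDensity fun x => ∏ i, f i (x i) := by
  refine Measure.pi_eq fun s hs => ?_
  rw [withDensity_apply _ (.univ_pi hs), Measure.restrict_pi_pi, lintegral_pi_prod_eq_prod _ hf]
  exact Finset.prod_congr rfl fun i _ => (withDensity_apply _ (hs i)).symm

theorem measurable_measure_pi {A : Type*} [MeasurableSpace A] {μ : A → ∀ i, Measure (X i)}
    [∀ a i, IsProbabilityMeasure (μ a i)] (hμ : ∀ i, Measurable fun a => μ a i) :
    Measurable fun a => Measure.pi (μ a) := by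
  refine .measure_of_isPiSystem_of_isProbabilityMeasure generateFrom_pi.symm isPiSystem_pi ?_
  rintro _ ⟨s, hs, rfl⟩
  simp_rw [Measure.pi_pi]
  exact Finset.measurable_prod _ fun i _ =>
    (Measure.measurable_coe (hs i (Set.mem_univ i))).comp (hμ i)

end ProductMeasure

theorem bind_map_prodMk_eq_compProd {A B : Type*} [MeasurableSpace A] [MeasurableSpace B]
    (μ : Measure A) [SFinite μ] (κ : Kernel A B) [IsSFiniteKernel κ] :
    (μ.bind fun a => (κ a).map (Prod.mk a)) = μ ⊗ₘ κ := by
  rw [Measure.compProd_eq_comp_prod]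
  congr with a : 1
  rw [Kernel.prod_apply, Kernel.id_apply, Measure.dirac_prod]

section Poisson

theorem measurable_poissonMeasure : Measurable poissonMeasure := by
  refine Measure.measurable_of_measurable_coe _ fun s hs => ?_
  simp only [poissonMeasure, Measure.sum_apply _ hs, Measure.smul_apply, smul_eq_mul]
  fun_prop

theorem hasSum_descFactorial_poissonMeasure (r : ℝ≥0) (m : ℕ) :
    HasSum (fun n : ℕ => (n.descFactorial m : ℝ) * (exp (-r) * r ^ n / n.factorial))
      ((r : ℝ) ^ m) := by
  have shifted_term (n : ℕ) :
      ((n + m).descFactorial m : ℝ) * (exp (-r) * r ^ (n + m) / (n + m).factorial) =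
        r ^ m * (exp (-r) * r ^ n / n.factorial) := by
    have hfac : ((n + m).factorial : ℝ) = n.factorial * (n + m).descFactorial m := by
      have h := Nat.factorial_mul_descFactorial (Nat.le_add_left m n)
      rw [Nat.add_sub_cancel] at h
      exact_mod_cast h.symm
    have hpos : ((n + m).descFactorial m : ℝ) ≠ 0 := by
      simp [Nat.descFactorial_eq_zero_iff_lt]
    rw [hfac]
    field_simp
    ring
  have initial_terms : ∑ n ∈ Finset.range m,
      (n.descFactorial m : ℝ) * (exp (-r) * r ^ n / n.factorial) = 0 :=
    Finset.sum_eq_zero fun n hn => by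
      rw [Nat.descFactorial_of_lt (Finset.mem_range.1 hn), Nat.cast_zero, zero_mul]
  rw [← hasSum_nat_add_iff' m, initial_terms, sub_zero]
  simp_rw [shifted_term]
  simpa only [mul_one] using (hasSum_one_poissonMeasure r).mul_left ((r : ℝ) ^ m)

theorem lintegral_descFactorial_poissonMeasure (r : ℝ≥0) (m : ℕ) :
    ∫⁻ n, (n.descFactorial m : ℝ≥0∞) ∂poissonMeasure r = (r : ℝ≥0∞) ^ m := by
  have term_eq (n : ℕ) : (n.descFactorial m : ℝ≥0∞) * poissonMeasure r {n} =
      ENNReal.ofReal (n.descFactorial m * (exp (-r) * r ^ n / n.factorial)) := by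
    rw [poissonMeasure_singleton, ENNReal.ofReal_mul (by positivity), ENNReal.ofReal_natCast]
  have hsum := hasSum_descFactorial_poissonMeasure r m
  simp_rw [lintegral_countable', term_eq]
  rw [← ENNReal.ofReal_tsum_of_nonneg (fun n => by positivity) hsum.summable, hsum.tsum_eq,
    ENNReal.ofReal_pow r.coe_nonneg, ENNReal.ofReal_coe_nnreal]

theorem poissonMeasure_zero : poissonMeasure 0 = Measure.dirac 0 := by
  refine Measure.ext_of_singleton fun n => ?_
  obtain rfl | hn := eq_or_ne n 0 <;> simp [poissonMeasure_singleton, *]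

theorem hasLaw_sum_poissonMeasure {Ω ι : Type*} [MeasurableSpace Ω] {P : Measure Ω}
    {X : ι → Ω → ℕ} {r : ι → ℝ≥0}
    (hlaw : ∀ i, HasLaw (X i) (poissonMeasure (r i)) P) (hindep : iIndepFun X P) (s : Finset ι) :
    HasLaw (∑ i ∈ s, X i) (poissonMeasure (∑ i ∈ s, r i)) P := by
  classical
  have := hindep.isProbabilityMeasure
  induction s using Finset.induction_on with
  | empty =>
    rw [Finset.sum_empty, Finset.sum_empty, poissonMeasure_zero]
    exact hasLaw_dirac_of_ae_eq .rfl
  | insert a s ha ih =>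
    rw [Finset.sum_insert ha, Finset.sum_insert ha]
    have hX := hindep.indepFun_finsetSum_of_notMem₀ (fun i => (hlaw i).aemeasurable) ha
    exact hX.symm.hasLaw_add_poissonMeasure (hlaw a) ih

end Poisson

section Gaussian

theorem lintegral_exp_neg_mul_sq_norm {V : Type*} [NormedAddCommGroup V] [InnerProductSpace ℝ V]
    [FiniteDimensional ℝ V] [MeasurableSpace V] [BorelSpace V] {b : ℝ} (hb : 0 < b) :
    ∫⁻ v : V, ENNReal.ofReal (exp (-b * ‖v‖ ^ 2)) =
      ENNReal.ofReal ((π / b) ^ ((Module.finrank ℝ V : ℝ) / 2)) := by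
  have hvalue := GaussianFourier.integral_rexp_neg_mul_sq_norm (V := V) hb
  have hint : Integrable fun v : V => exp (-b * ‖v‖ ^ 2) :=
    .of_integral_ne_zero <| by rw [hvalue]; positivity
  rw [← hvalue, ofReal_integral_eq_lintegral_ofReal hint (ae_of_all _ fun v => (exp_pos _).le)]

variable (d : ℕ) {σ2 c : ℝ}

theorem gaussPdf_nonneg (hσ : 0 ≤ σ2) (x : EuclideanSpace ℝ (Fin d)) : 0 ≤ gaussPdf d σ2 x := by
  unfold gaussPdf
  positivity

@[fun_prop]
theorem measurable_gaussPdf (σ2 : ℝ) : Measurable (gaussPdf d σ2) := by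
  unfold gaussPdf
  fun_prop

/-- Completing the square in `y`. -/
theorem gaussPdf_mul_exp_neg_mul_sq_norm_sub (hσ : 0 < σ2) (hc : 0 < 1 + σ2 * c)
    (x y : EuclideanSpace ℝ (Fin d)) :
    gaussPdf d σ2 y * exp (-(c / 2) * ‖x - y‖ ^ 2) =
      (2 * π * σ2) ^ (-(d : ℝ) / 2) * exp (-(c / (1 + σ2 * c) / 2) * ‖x‖ ^ 2) *
        exp (-((1 + σ2 * c) / (2 * σ2)) * ‖y - (σ2 * c / (1 + σ2 * c)) • x‖ ^ 2) := by
  rw [gaussPdf, mul_assoc _ (exp _), mul_assoc _ (exp _), ← exp_add, ← exp_add]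
  congr 2
  rw [norm_sub_sq_real, norm_sub_sq_real, norm_smul, inner_smul_right, mul_pow, norm_eq_abs,
    sq_abs, real_inner_comm x y]
  field_simp
  ring

theorem lintegral_exp_neg_mul_sq_norm_sub_gaussMeasure (hσ : 0 < σ2) (hc : 0 < 1 + σ2 * c)
    (x : EuclideanSpace ℝ (Fin d)) :
    ∫⁻ y, ENNReal.ofReal (exp (-(c / 2) * ‖x - y‖ ^ 2)) ∂gaussMeasure d σ2 =
      ENNReal.ofReal ((1 + σ2 * c) ^ (-(d : ℝ) / 2)) *
        ENNReal.ofReal (exp (-(c / (1 + σ2 * c) / 2) * ‖x‖ ^ 2)) := by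
  have normalization :
      (2 * π * σ2) ^ (-(d : ℝ) / 2) * (π / ((1 + σ2 * c) / (2 * σ2))) ^ ((d : ℝ) / 2) =
        (1 + σ2 * c) ^ (-(d : ℝ) / 2) := by
    have hdiv : π / ((1 + σ2 * c) / (2 * σ2)) = 2 * π * σ2 / (1 + σ2 * c) := by field_simp
    rw [hdiv, div_rpow (by positivity) hc.le, neg_div, rpow_neg (by positivity), rpow_neg hc.le]
    field_simp
  rw [gaussMeasure, lintegral_withDensity_eq_lintegral_mul _ (by fun_prop) (by fun_prop)]
  simp_rw [Pi.mul_apply, ← ENNReal.ofReal_mul (gaussPdf_nonneg d hσ.le _),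
    gaussPdf_mul_exp_neg_mul_sq_norm_sub d hσ hc x]
  simp_rw [ENNReal.ofReal_mul' (exp_pos _).le]
  rw [lintegral_const_mul _ (by fun_prop),
    lintegral_sub_right_eq_self (μ := volume) fun v : EuclideanSpace ℝ (Fin d) =>
      ENNReal.ofReal (exp (-((1 + σ2 * c) / (2 * σ2)) * ‖v‖ ^ 2)),
    lintegral_exp_neg_mul_sq_norm (by positivity), finrank_euclideanSpace_fin, mul_right_comm,
    ← ENNReal.ofReal_mul (by positivity), normalization]

theorem lintegral_exp_neg_mul_sq_norm_gaussMeasure (hσ : 0 < σ2) (hc : 0 < 1 + σ2 * c) :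
    ∫⁻ x, ENNReal.ofReal (exp (-(c / 2) * ‖x‖ ^ 2)) ∂gaussMeasure d σ2 =
      ENNReal.ofReal ((1 + σ2 * c) ^ (-(d : ℝ) / 2)) := by
  simpa using lintegral_exp_neg_mul_sq_norm_sub_gaussMeasure d hσ hc 0

theorem isProbabilityMeasure_gaussMeasure (hσ : 0 < σ2) :
    IsProbabilityMeasure (gaussMeasure d σ2) :=
  ⟨by simpa using lintegral_exp_neg_mul_sq_norm_gaussMeasure (c := 0) d hσ (by simp)⟩

theorem pi_gaussMeasure {ι : Type*} [Fintype ι] (hσ : 0 < σ2) :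
    Measure.pi (fun _ : ι => gaussMeasure d σ2) =
      volume.withDensity fun z => ENNReal.ofReal (∏ i, gaussPdf d σ2 (z i)) := by
  have : IsProbabilityMeasure (volume.withDensity fun x => ENNReal.ofReal (gaussPdf d σ2 x)) :=
    isProbabilityMeasure_gaussMeasure d hσ
  simp_rw [ENNReal.ofReal_prod_of_nonneg fun _ _ => gaussPdf_nonneg d hσ.le _]
  exact pi_withDensity (fun _ => volume) fun _ => by fun_prop

end Gaussian

section Edges

/-- The intensity `λ_{ij} = exp (α_i + α_j - β ‖z_i - z_j‖²)` of the edge between `i` and `j`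
when the latent positions are `z`. -/
noncomputable def edgeIntensity {ι E : Type*} [SeminormedAddCommGroup E] (β : ℝ) (α : ι → ℝ)
    (z : ι → E) (i j : ι) : ℝ≥0 :=
  (exp (α i + α j - β * ‖z i - z j‖ ^ 2)).toNNReal

theorem edgeIntensity_comm {ι E : Type*} [SeminormedAddCommGroup E] (β : ℝ) (α : ι → ℝ)
    (z : ι → E) (i j : ι) : edgeIntensity β α z i j = edgeIntensity β α z j i := by
  rw [edgeIntensity, edgeIntensity, add_comm, norm_sub_rev]

theorem coe_edgeIntensity_pow {ι E : Type*} [SeminormedAddCommGroup E] (β : ℝ) (α : ι → ℝ)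
    (z : ι → E) (i j : ι) (n : ℕ) :
    (edgeIntensity β α z i j : ℝ≥0∞) ^ n =
      ENNReal.ofReal (exp ((α i + α j) * n)) *
        ENNReal.ofReal (exp (-(2 * β * n / 2) * ‖z i - z j‖ ^ 2)) := by
  rw [edgeIntensity, ← ENNReal.ofReal, ← ENNReal.ofReal_pow (exp_pos _).le, ← exp_nat_mul,
    ← ENNReal.ofReal_mul (exp_pos _).le, ← exp_add]
  congr 2
  ring

variable {d N : ℕ} {β σ2 : ℝ} {α : Fin N → ℝ}

variable (d N β α) in
/-- The conditional law of the edge weights given the latent positions: independent Poisson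
variables with intensities `edgeIntensity`. -/
noncomputable def edgeKernel : Kernel (Fin N → EuclideanSpace ℝ (Fin d)) (Pairs N → ℕ) where
  toFun z := Measure.pi fun p => poissonMeasure (edgeIntensity β α z p.1.1 p.1.2)
  measurable' := measurable_measure_pi fun p =>
    measurable_poissonMeasure.comp (by unfold edgeIntensity; fun_prop)

instance : IsMarkovKernel (edgeKernel d N β α) :=
  ⟨fun z => inferInstanceAs <| IsProbabilityMeasure <|
    Measure.pi fun p : Pairs N => poissonMeasure (edgeIntensity β α z p.1.1 p.1.2)⟩

theorem jointLaw_eq_compProd (hσ : 0 < σ2) :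
    jointLaw d N β α σ2 = (Measure.pi fun _ => gaussMeasure d σ2) ⊗ₘ edgeKernel d N β α := by
  have := isProbabilityMeasure_gaussMeasure d hσ
  rw [← bind_map_prodMk_eq_compProd, pi_gaussMeasure d hσ]
  rfl

/-- The edge between two distinct nodes. -/
def Pairs.ofNe {i j : Fin N} (h : i ≠ j) : Pairs N :=
  ⟨(min i j, max i j), min_lt_max.2 h⟩

theorem Pairs.apply_ofNe {A : Type*} {g : Fin N → Fin N → A} (hg : ∀ i j, g i j = g j i)
    {i j : Fin N} (h : i ≠ j) : g (Pairs.ofNe h).1.1 (Pairs.ofNe h).1.2 = g i j := by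
  obtain hij | hij := le_total i j
  · simp [Pairs.ofNe, hij]
  · simp [Pairs.ofNe, hij, hg i j]

theorem Pairs.ofNe_injective (i : Fin N) :
    Function.Injective fun j : {j // j ≠ i} => Pairs.ofNe j.2.symm := by
  rintro ⟨j, hj⟩ ⟨k, hk⟩ hjk
  have hmin : min i j = min i k := congrArg (fun p : Pairs N => p.1.1) hjk
  have hmax : max i j = max i k := congrArg (fun p : Pairs N => p.1.2) hjk
  grind

/-- The strength of node `i` as a function of the weights of the unordered edges. -/
def nodeStrength (i : Fin N) (y : Pairs N → ℕ) : ℕ :=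
  ∑ j : {j // j ≠ i}, y (Pairs.ofNe j.2.symm)

theorem hasLaw_nodeStrength (i : Fin N) (z : Fin N → EuclideanSpace ℝ (Fin d)) :
    HasLaw (nodeStrength i)
      (poissonMeasure (∑ j ∈ Finset.univ.erase i, edgeIntensity β α z i j))
      (edgeKernel d N β α z) := by
  let law (p : Pairs N) := poissonMeasure (edgeIntensity β α z p.1.1 p.1.2)
  have edge_law (j : {j // j ≠ i}) : HasLaw (fun y : Pairs N → ℕ => y (Pairs.ofNe j.2.symm))
      (poissonMeasure (edgeIntensity β α z i j)) (Measure.pi law) := by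
    rw [← Pairs.apply_ofNe (edgeIntensity_comm β α z) j.2.symm]
    exact (measurePreserving_eval law (Pairs.ofNe j.2.symm)).hasLaw
  have edges_indep : iIndepFun (fun (j : {j // j ≠ i}) (y : Pairs N → ℕ) =>
      y (Pairs.ofNe j.2.symm)) (Measure.pi law) :=
    (iIndepFun_pi (X := fun _ n => n) fun _ => aemeasurable_id).precomp (Pairs.ofNe_injective i)
  have strength_law := hasLaw_sum_poissonMeasure edge_law edges_indep Finset.univ
  rw [← Finset.sum_subtype (Finset.univ.erase i) (by simp) (edgeIntensity β α z i)] at strength_law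
  exact strength_law.congr (.of_forall fun y => by simp [nodeStrength])

theorem lintegral_descFactorial_nodeStrength (hσ : 0 < σ2) (i : Fin N) (m : ℕ) :
    ∫⁻ w, ((nodeStrength i w.2).descFactorial m : ℝ≥0∞) ∂jointLaw d N β α σ2 =
      ∫⁻ z, (∑ j ∈ Finset.univ.erase i, (edgeIntensity β α z i j : ℝ≥0∞)) ^ m
        ∂Measure.pi fun _ => gaussMeasure d σ2 := by
  have := isProbabilityMeasure_gaussMeasure d hσ
  rw [jointLaw_eq_compProd hσ, Measure.lintegral_compProd (by unfold nodeStrength; fun_prop)]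
  refine lintegral_congr fun z => ?_
  rw [(hasLaw_nodeStrength i z).lintegral_comp (f := fun n => (n.descFactorial m : ℝ≥0∞))
    (by fun_prop), lintegral_descFactorial_poissonMeasure]
  push_cast
  rfl

end Edges

namespace MSLS

variable {Ω : Type} [MeasurableSpace Ω] (M : MSLS Ω) (i : Fin M.N) (t : ℕ)

theorem strength_eq_nodeStrength (ω : Ω) :
    M.strength i t ω = nodeStrength i fun p => M.Y p.1.1 p.1.2 t ω := by
  simp_rw [strength, nodeStrength,
    Pairs.apply_ofNe (g := fun j l => M.Y j l t ω) (M.Y_symm · · t ω)]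
  exact Finset.sum_subtype _ (by simp) _

@[fun_prop]
theorem measurable_strength : Measurable (M.strength i t) := by
  have := M.Y_meas
  unfold strength
  fun_prop

theorem lintegral_descFactorial_strength (k : Fin M.K) (m : ℕ) :
    ∫⁻ ω, ((M.strength i t ω).descFactorial m : ℝ≥0∞) ∂(M.P[|{ω | M.s t ω = k}]) =
      ∫⁻ z, (∑ j ∈ Finset.univ.erase i, (edgeIntensity M.β M.α z i j : ℝ≥0∞)) ^ m
        ∂Measure.pi fun _ => gaussMeasure M.d (M.σ2 k) := by
  have := M.Z_meas
  have := M.Y_meas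
  simp_rw [strength_eq_nodeStrength]
  rw [← lintegral_descFactorial_nodeStrength (M.σ2_pos k), ← M.cond_law_state t k,
    lintegral_map (by unfold nodeStrength; fun_prop) (by fun_prop)]

end MSLS

section StarIntegral

variable {ι : Type*} [DecidableEq ι]

theorem lintegral_prod_exp_neg_mul_sq_norm_sub_pi_gaussMeasure [Fintype ι] (d : ℕ) {σ2 : ℝ}
    (hσ : 0 < σ2) (i : ι) {c : ι → ℝ} (hc : ∀ j, 0 ≤ c j) :
    ∫⁻ z, ∏ j ∈ Finset.univ.erase i, ENNReal.ofReal (exp (-(c j / 2) * ‖z i - z j‖ ^ 2))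
        ∂Measure.pi (fun _ => gaussMeasure d σ2) =
      ENNReal.ofReal
        ((1 + σ2 * ∑ j ∈ Finset.univ.erase i, c j / (1 + σ2 * c j)) ^ (-(d : ℝ) / 2) *
          ∏ j ∈ Finset.univ.erase i, (1 + σ2 * c j) ^ (-(d : ℝ) / 2)) := by
  have := isProbabilityMeasure_gaussMeasure d hσ
  have hpos (j : ι) : 0 < 1 + σ2 * c j := by have := hc j; positivity
  have hsum : 0 ≤ ∑ j ∈ Finset.univ.erase i, c j / (1 + σ2 * c j) :=
    Finset.sum_nonneg fun j _ => div_nonneg (hc j) (hpos j).le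
  have prod_exp (u : EuclideanSpace ℝ (Fin d)) :
      ∏ j ∈ Finset.univ.erase i, ENNReal.ofReal (exp (-(c j / (1 + σ2 * c j) / 2) * ‖u‖ ^ 2)) =
        ENNReal.ofReal (exp
          (-((∑ j ∈ Finset.univ.erase i, c j / (1 + σ2 * c j)) / 2) * ‖u‖ ^ 2)) := by
    rw [← ENNReal.ofReal_prod_of_nonneg fun _ _ => (exp_pos _).le, ← exp_sum, ← Finset.sum_mul,
      Finset.sum_neg_distrib, Finset.sum_div]
  rw [lintegral_pi_prod_erase (fun _ => gaussMeasure d σ2) i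
    (g := fun j u v => ENNReal.ofReal (exp (-(c j / 2) * ‖u - v‖ ^ 2)))
    fun j => by unfold Function.uncurry; fun_prop]
  simp_rw [lintegral_exp_neg_mul_sq_norm_sub_gaussMeasure d hσ (hpos _), Finset.prod_mul_distrib,
    prod_exp]
  rw [lintegral_const_mul _ (by fun_prop),
    lintegral_exp_neg_mul_sq_norm_gaussMeasure d hσ (by positivity),
    ← ENNReal.ofReal_prod_of_nonneg fun j _ => (rpow_pos_of_pos (hpos j) _).le, mul_comm,
    ENNReal.ofReal_mul (by positivity)]

theorem lintegral_prod_edgeIntensity_pow [Fintype ι] (d : ℕ) {β σ2 : ℝ} (hβ : 0 ≤ β)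
    (hσ : 0 < σ2) (α : ι → ℝ) (i : ι) (h : ι → ℕ) :
    ∫⁻ z, ∏ j ∈ Finset.univ.erase i, (edgeIntensity β α z i j : ℝ≥0∞) ^ h j
        ∂Measure.pi (fun _ => gaussMeasure d σ2) =
      ENNReal.ofReal (exp (∑ j ∈ Finset.univ.erase i, (α i + α j) * h j) *
        ((1 + σ2 * ∑ j ∈ Finset.univ.erase i, 2 * β * h j / (1 + σ2 * (2 * β * h j))) ^
            (-(d : ℝ) / 2) *
          ∏ j ∈ Finset.univ.erase i, (1 + σ2 * (2 * β * h j)) ^ (-(d : ℝ) / 2))) := by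
  simp_rw [coe_edgeIntensity_pow, Finset.prod_mul_distrib]
  rw [lintegral_const_mul _ (by fun_prop),
    lintegral_prod_exp_neg_mul_sq_norm_sub_pi_gaussMeasure d hσ i fun j => by positivity,
    ← ENNReal.ofReal_prod_of_nonneg fun _ _ => (exp_pos _).le, ← exp_sum,
    ENNReal.ofReal_mul (exp_pos _).le]

end StarIntegral

/-- The right-hand side is the shape of the factorial moment formula; the left-hand side avoids
the junk value of `1 / c j` at `c j = 0`, so it needs no restriction to positive `c j`. -/
theorem rpow_mul_prod_rpow_eq_filter_pos {ι : Type*} (s : Finset ι) {σ2 : ℝ} (hσ : 0 < σ2)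
    {c : ι → ℝ} (hc : ∀ j, 0 ≤ c j) (r : ℝ) :
    (1 + σ2 * ∑ j ∈ s, c j / (1 + σ2 * c j)) ^ (-r) * ∏ j ∈ s, (1 + σ2 * c j) ^ (-r) =
      σ2 ^ (-r) * (1 / σ2 + ∑ j ∈ s with 0 < c j, (σ2 + 1 / c j)⁻¹) ^ (-r) *
        ∏ j ∈ s with 0 < c j, (1 / c j) ^ r * (σ2 + 1 / c j) ^ (-r) := by
  have pos_of_ne {j : ι} (hj : c j ≠ 0) : 0 < c j := (hc j).lt_of_ne' hj
  have sum_eq : ∑ j ∈ s with 0 < c j, (σ2 + 1 / c j)⁻¹ = ∑ j ∈ s, c j / (1 + σ2 * c j) := by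
    rw [← Finset.sum_filter_of_ne (f := fun j => c j / (1 + σ2 * c j)) (p := (0 < c ·))
      fun j _ hj => pos_of_ne fun h0 => hj (by simp [h0])]
    refine Finset.sum_congr rfl fun j hj => ?_
    have := (Finset.mem_filter.1 hj).2
    field_simp
    ring
  have prod_eq : ∏ j ∈ s with 0 < c j, (1 / c j) ^ r * (σ2 + 1 / c j) ^ (-r) =
      ∏ j ∈ s, (1 + σ2 * c j) ^ (-r) := by
    rw [← Finset.prod_filter_of_ne (f := fun j => (1 + σ2 * c j) ^ (-r)) (p := (0 < c ·))
      fun j _ hj => pos_of_ne fun h0 => hj (by simp [h0])]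
    refine Finset.prod_congr rfl fun j hj => ?_
    have := (Finset.mem_filter.1 hj).2
    have hfactor : σ2 + 1 / c j = (1 + σ2 * c j) * (1 / c j) := by
      field_simp
      ring
    rw [hfactor, mul_rpow (by positivity) (by positivity), mul_left_comm,
      ← rpow_add (by positivity), add_neg_cancel, rpow_zero, mul_one]
  have hsum : 0 ≤ ∑ j ∈ s, c j / (1 + σ2 * c j) :=
    Finset.sum_nonneg fun j _ => by have := hc j; positivity
  rw [sum_eq, prod_eq, ← mul_rpow hσ.le (by positivity), mul_add, mul_one_div_cancel hσ.ne']

theorem filter_antidiagonalTuple_eq_piAntidiag {N : ℕ} (i : Fin N) (m : ℕ) :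
    (Finset.Nat.antidiagonalTuple N m).filter (fun h => h i = 0) =
      (Finset.univ.erase i).piAntidiag m := by
  ext h
  rw [Finset.mem_filter, Finset.Nat.mem_antidiagonalTuple, Finset.mem_piAntidiag,
    ← Finset.add_sum_erase _ _ (Finset.mem_univ i)]
  constructor
  · rintro ⟨hsum, hi⟩
    refine ⟨by simpa [hi] using hsum, fun j hj => ?_⟩
    have : j ≠ i := by rintro rfl; exact hj hi
    simpa using this
  · rintro ⟨hsum, hsupp⟩
    have hi : h i = 0 := by
      by_contra hi
      simpa using hsupp i hi
    exact ⟨by simpa [hi] using hsum, hi⟩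

theorem MSLS.lintegral_descFactorial_strength_eq_sum {Ω : Type} [MeasurableSpace Ω] (M : MSLS Ω)
    (i : Fin M.N) (t : ℕ) (k : Fin M.K) (m : ℕ) :
    ∫⁻ ω, ((M.strength i t ω).descFactorial m : ℝ≥0∞) ∂(M.P[|{ω | M.s t ω = k}]) =
      ∑ h ∈ (Finset.univ.erase i).piAntidiag m,
        ENNReal.ofReal ((Nat.multinomial (Finset.univ.erase i) h : ℝ) *
          (exp (∑ j ∈ Finset.univ.erase i, (M.α i + M.α j) * h j) *
            ((1 + M.σ2 k * ∑ j ∈ Finset.univ.erase i,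
                2 * M.β * h j / (1 + M.σ2 k * (2 * M.β * h j))) ^ (-(M.d : ℝ) / 2) *
              ∏ j ∈ Finset.univ.erase i,
                (1 + M.σ2 k * (2 * M.β * h j)) ^ (-(M.d : ℝ) / 2)))) := by
  have hmeas (j : Fin M.N) : Measurable fun z : Fin M.N → EuclideanSpace ℝ (Fin M.d) =>
      (edgeIntensity M.β M.α z i j : ℝ≥0∞) := by
    unfold edgeIntensity
    fun_prop
  simp_rw [M.lintegral_descFactorial_strength, Finset.sum_pow_eq_sum_piAntidiag]
  rw [lintegral_finsetSum _ fun h _ => by fun_prop]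
  refine Finset.sum_congr rfl fun h _ => ?_
  rw [lintegral_const_mul _ (by fun_prop),
    lintegral_prod_edgeIntensity_pow M.d M.β_pos.le (M.σ2_pos k),
    ENNReal.ofReal_mul (Nat.cast_nonneg _), ENNReal.ofReal_natCast]

theorem statement14_general {Ω : Type} [MeasurableSpace Ω] (M : MSLS Ω) (i : Fin M.N) (t : ℕ)
    (k : Fin M.K) (m : ℕ) :
    ∫ ω, (Nat.descFactorial (M.strength i t ω) m : ℝ) ∂(M.P[|{ω | M.s t ω = k}]) =
      ∑ h ∈ (Finset.Nat.antidiagonalTuple M.N m).filter (fun h => h i = 0),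
        (Nat.multinomial (Finset.univ.erase i) h : ℝ) *
          Real.exp (∑ j ∈ Finset.univ.erase i, (M.α i + M.α j) * (h j : ℝ)) *
          (M.σ2 k) ^ (-(M.d : ℝ) / 2) *
          (1 / M.σ2 k +
              ∑ j ∈ (Finset.univ.erase i).filter (fun j => 0 < h j),
                (M.σ2 k + 1 / (2 * M.β * (h j : ℝ)))⁻¹) ^ (-(M.d : ℝ) / 2) *
          ∏ j ∈ (Finset.univ.erase i).filter (fun j => 0 < h j),
            (1 / (2 * M.β * (h j : ℝ))) ^ ((M.d : ℝ) / 2) *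
              (M.σ2 k + 1 / (2 * M.β * (h j : ℝ))) ^ (-(M.d : ℝ) / 2) := by
  have hβ := M.β_pos
  have hσ := M.σ2_pos k
  have pos_iff (n : ℕ) : 0 < 2 * M.β * (n : ℝ) ↔ 0 < n := by simp [hβ]
  rw [integral_eq_lintegral_of_nonneg_ae (ae_of_all _ fun ω => Nat.cast_nonneg _) (by fun_prop)]
  simp_rw [ENNReal.ofReal_natCast]
  rw [M.lintegral_descFactorial_strength_eq_sum,
    ENNReal.toReal_sum fun _ _ => ENNReal.ofReal_ne_top, filter_antidiagonalTuple_eq_piAntidiag]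
  refine Finset.sum_congr rfl fun h _ => ?_
  have star_eq := rpow_mul_prod_rpow_eq_filter_pos (Finset.univ.erase i) hσ
    (c := fun j => 2 * M.β * h j) (fun j => by positivity) ((M.d : ℝ) / 2)
  simp_rw [pos_iff, ← neg_div] at star_eq
  rw [star_eq, ENNReal.toReal_ofReal]
  · ring
  · rw [← star_eq]
    positivity

/-- Under the MS-LS model with `α_i + α_j = α` for all pairs, the `m`-th
factorial moment of the nodal strength within state `k` equals
`Σ_{h ∈ H_i} binom(m; h) e^{αm} (σ_k²)^{-d/2} (1/σ_k² + Σ_{j∈N_i} τ_{kj}⁻¹)^{-d/2}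
  Π_{j∈N_i} (1/(2βh_j))^{d/2} τ_{kj}^{-d/2}`, with `τ_{kj} = σ_k² + 1/(2βh_j)`,
`H_i` the multi-indices `(h_j)_{j≠i}` of nonnegative integers summing to `m`, and
`N_i = {j ≠ i : h_j > 0}`. -/
theorem statement14 {Ω : Type} [MeasurableSpace Ω] (M : MSLS Ω) (a : ℝ)
    (hα : ∀ i j, M.α i + M.α j = a) (i : Fin M.N) (t : ℕ) (k : Fin M.K)
    (m : ℕ) (hm : 1 ≤ m) :
    ∫ ω, (Nat.descFactorial (M.strength i t ω) m : ℝ) ∂(M.P[|{ω | M.s t ω = k}]) =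
      ∑ h ∈ (Finset.Nat.antidiagonalTuple M.N m).filter (fun h => h i = 0),
        (Nat.multinomial (Finset.univ.erase i) h : ℝ) * Real.exp (a * (m : ℝ)) *
          (M.σ2 k) ^ (-(M.d : ℝ) / 2) *
          (1 / M.σ2 k +
              ∑ j ∈ (Finset.univ.erase i).filter (fun j => 0 < h j),
                (M.σ2 k + 1 / (2 * M.β * (h j : ℝ)))⁻¹) ^ (-(M.d : ℝ) / 2) *
          ∏ j ∈ (Finset.univ.erase i).filter (fun j => 0 < h j),
            (1 / (2 * M.β * (h j : ℝ))) ^ ((M.d : ℝ) / 2) *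
              (M.σ2 k + 1 / (2 * M.β * (h j : ℝ))) ^ (-(M.d : ℝ) / 2) := by
  rw [statement14_general]
  refine Finset.sum_congr rfl fun h hh => ?_
  rw [filter_antidiagonalTuple_eq_piAntidiag, Finset.mem_piAntidiag] at hh
  simp_rw [hα, ← Finset.mul_sum, ← Nat.cast_sum, hh.1]
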